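/- (Proposition 2, Nash's existence theorem for the ST game.) Every two-player game with finite nonempty action sets and real-valued utilities has at least one mixed-strategy Nash equilibrium: there exist mixed strategies p* ∈ Δ(A1) and q* ∈ Δ(A2) such that ū1(p*, q*) ≥ ū1(p, q*) for every p ∈ Δ(A1), and ū2(p*, q*) ≥ ū2(p*, q) for every q ∈ Δ(A2). -/

import Mathlib

/-!
Suppose every ridge of a pure complex lies in an even number of facets. Then, for any coloring of
the vertices, the number of facets that carry all colors is even. Scarf's complex has this property:
its vertices are the elements of a finite set, ranked by several linear orders, together with the
orders themselves, and a ridge lies in two facets because a dominant set admits a pivot step. One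
of its facets consists of all the orders and carries all colors when each order is its own color,
so there is another one; it is a dominant set for exactly the colors of its elements.

For the grid points of a simplex ranked by their coordinates, dominant sets are small. A limit
therefore shows that if closed sets `F i` cover the simplex, some point lies in every `F i` with
`i` in its support. With `F i` the set where the `i`-th coordinate of a continuous `f` is largest,
such a point `z` maximizes the pairing with `f z` over the simplex.

For two players, use the simplex of joint distributions of the pairs of actions, with `f z (a, b)`
the sum of the payoffs of `a` and of `b` against the marginals of `z`. The marginals of a maximizer
are an equilibrium, as is seen by comparing with product distributions.
-/

namespace NashExistence

open Finset

section Parity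

variable {V I : Type*} [DecidableEq V] [DecidableEq I]

theorem image_erase_of_injOn {s : Finset V} {g : V → I} (hg : Set.InjOn g s) {v : V}
    (hv : v ∈ s) : (s.erase v).image g = (s.image g).erase (g v) := by
  rw [erase_eq, image_sdiff_of_injOn hg (singleton_subset_iff.2 hv), image_singleton, ← erase_eq]

theorem card_filter_image_erase_eq_image {s : Finset V} {g : V → I} (h : #(s.image g) + 1 = #s) :
    #{v ∈ s | (s.erase v).image g = s.image g} = 2 := by
  obtain ⟨a, ha, b, hb, hab, hgab⟩ : ∃ a ∈ s, ∃ b ∈ s, a ≠ b ∧ g a = g b :=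
    exists_ne_map_eq_of_card_lt_of_maps_to (t := s.image g) (by omega)
      fun v hv ↦ mem_image_of_mem g hv
  have injOn_erase {v} (hv : v ∈ s) (himage : (s.erase v).image g = s.image g) :
      Set.InjOn g (s.erase v) := by
    rw [← card_image_iff, himage, card_erase_of_mem hv]
    omega
  have image_erase {v w} (hw : w ∈ s) (hvw : v ≠ w) (hg : g v = g w) :
      (s.erase v).image g = s.image g := by
    grind
  rw [card_eq_two]
  refine ⟨a, b, hab, Finset.ext fun v ↦ ?_⟩
  simp only [mem_filter, mem_insert, mem_singleton]
  constructor
  · rintro ⟨hv, himage⟩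
    by_contra! hne
    exact hab (injOn_erase hv himage (by simp [ha, hne.1.symm]) (by simp [hb, hne.2.symm]) hgab)
  · rintro (rfl | rfl)
    · exact ⟨ha, image_erase hb hab hgab⟩
    · exact ⟨hb, image_erase ha hab.symm hgab.symm⟩

theorem sum_card_filter_erase_eq_sum_card_insert_mem [Fintype V] {R : Finset (Finset V)} {n : ℕ}
    (hcard : ∀ σ ∈ R, #σ = n) (P : Finset V → Prop) [DecidablePred P] :
    ∑ σ ∈ R, #{v ∈ σ | P (σ.erase v)} =
      ∑ τ with #τ + 1 = n ∧ P τ, #{v | insert v τ ∈ R} := by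
  have notMem {τ : Finset V} {v : V} (hτ : #τ + 1 = n) (hv : insert v τ ∈ R) : v ∉ τ := by
    intro hvτ
    have := hcard _ hv
    rw [insert_eq_of_mem hvτ] at this
    omega
  simp only [← card_sigma]
  refine card_nbij' (fun p ↦ ⟨p.1.erase p.2, p.2⟩) (fun p ↦ ⟨insert p.2 p.1, p.2⟩) ?_ ?_ ?_ ?_ <;>
    rintro ⟨σ, v⟩ h <;>
    simp only [coe_sigma, Set.mem_sigma_iff, mem_coe, mem_filter, mem_univ, true_and] at h ⊢
  · obtain ⟨hσ, hv, hP⟩ := h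
    exact ⟨⟨by rw [card_erase_add_one hv, hcard σ hσ], hP⟩, by rwa [insert_erase hv]⟩
  · obtain ⟨⟨hτ, hP⟩, hv⟩ := h
    rw [erase_insert (notMem hτ hv)]
    exact ⟨hv, mem_insert_self v σ, hP⟩
  · rw [insert_erase h.2.1]
  · rw [erase_insert (notMem h.1.1 h.2)]

variable [Fintype I]

theorem odd_card_filter_image_erase_iff {σ : Finset V} (hσ : #σ = Fintype.card I) (c : V → I)
    (i₀ : I) :
    Odd #{v ∈ σ | (σ.erase v).image c = univ.erase i₀} ↔ σ.image c = univ := by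
  constructor
  · intro hodd
    by_contra hne
    obtain ⟨v, hv⟩ := card_pos.1 hodd.pos
    obtain ⟨hvσ, hv⟩ := mem_filter.1 hv
    have himage : σ.image c = univ.erase i₀ := by
      rw [← insert_erase hvσ, image_insert, hv] at hne ⊢
      grind
    rw [← himage, card_filter_image_erase_eq_image] at hodd
    · exact absurd hodd (by decide)
    · rw [himage, hσ, card_erase_add_one (mem_univ i₀), card_univ]
  · intro himage
    have hinj : Set.InjOn c σ := by rw [← card_image_iff, himage, card_univ, hσ]
    obtain ⟨v, hv, rfl⟩ := mem_image.1 (himage.ge (mem_univ i₀))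
    have hfilter : {w ∈ σ | (σ.erase w).image c = univ.erase (c v)} = {v} := by
      ext w
      simp only [mem_filter, mem_singleton]
      constructor
      · rintro ⟨hw, hwv⟩
        rw [image_erase_of_injOn hinj hw, himage, erase_inj _ (mem_univ _)] at hwv
        exact hinj hw hv hwv
      · rintro rfl
        exact ⟨hv, by rw [image_erase_of_injOn hinj hv, himage]⟩
    rw [hfilter, card_singleton]
    exact odd_one

theorem even_card_filter_image_eq_univ [Fintype V] [Nonempty I] {R : Finset (Finset V)}
    (hcard : ∀ σ ∈ R, #σ = Fintype.card I)
    (heven : ∀ τ : Finset V, #τ + 1 = Fintype.card I → Even #{v | insert v τ ∈ R}) (c : V → I) :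
    Even #{σ ∈ R | σ.image c = univ} := by
  obtain ⟨i₀⟩ := ‹Nonempty I›
  -- Double count the pairs of a facet and a face of it that misses exactly the color `i₀`.
  have hsum : Even (∑ σ ∈ R, #{v ∈ σ | (σ.erase v).image c = univ.erase i₀}) := by
    rw [sum_card_filter_erase_eq_sum_card_insert_mem hcard (fun τ ↦ τ.image c = univ.erase i₀)]
    exact even_sum _ fun τ hτ ↦ heven τ (mem_filter.1 hτ).2.1
  rw [even_sum_iff_even_card_odd] at hsum
  rwa [filter_congr fun σ hσ ↦ (odd_card_filter_image_erase_iff (hcard σ hσ) c i₀).symm]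

end Parity

section Dominant

variable {I X L : Type*} [LinearOrder L] {f : I → X → L} {σ τ : Finset X} {C D : Finset I}
  {μ : I → X} {k l : I} {y z : X}

/-- `y` beats `σ` on the set `C` of criteria if, for every criterion in `C`, it is strictly better
than the worst element of `σ`. Criterion `i` compares the elements of `X` by their values under
`f i`. -/
def Beats (f : I → X → L) (σ : Finset X) (C : Finset I) (y : X) : Prop :=
  ∀ i ∈ C, ∃ x ∈ σ, f i x < f i y

/-- Scarf's dominant sets: `σ` is dominant for the set `C` of criteria if nothing beats it on `C`.
The empty set is beaten on `C` only if `C` is empty. -/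
def Dominant (f : I → X → L) (σ : Finset X) (C : Finset I) : Prop :=
  ∀ y, ¬Beats f σ C y

/-- The function `μ` selects, for every criterion, a worst element of `τ`. -/
def IsWorst (f : I → X → L) (τ : Finset X) (μ : I → X) : Prop :=
  ∀ i, μ i ∈ τ ∧ ∀ x ∈ τ, f i (μ i) ≤ f i x

/-- The entering element of a pivot step: when the criterion `k` is given up, `y` is the best
element with respect to `k` among those that beat `τ` on the remaining criteria. -/
def IsEntering [DecidableEq I] (f : I → X → L) (τ : Finset X) (D : Finset I) (k : I) (y : X) :
    Prop :=
  Beats f τ (D.erase k) y ∧ ∀ z, Beats f τ (D.erase k) z → f k z ≤ f k y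

theorem Beats.mono (h : Beats f τ D y) (hτ : τ ⊆ σ) (hC : C ⊆ D) : Beats f σ C y := fun i hi ↦
  let ⟨x, hx, hxy⟩ := h i (hC hi)
  ⟨x, hτ hx, hxy⟩

theorem Dominant.mono (h : Dominant f σ C) (hτ : τ ⊆ σ) (hC : C ⊆ D) : Dominant f τ D :=
  fun y hy ↦ h y (hy.mono hτ hC)

theorem Dominant.exists_forall_le (h : Dominant f σ C) (y : X) :
    ∃ i ∈ C, ∀ x ∈ σ, f i y ≤ f i x := by
  simpa only [Beats, not_forall, not_exists, not_and, not_lt, exists_prop] using h y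

theorem dominant_singleton_iff :
    Dominant f {y} {k} ↔ ∀ z, f k z ≤ f k y := by
  simp [Dominant, Beats]

theorem exists_isWorst (f : I → X → L) (hτ : τ.Nonempty) : ∃ μ, IsWorst f τ μ := by
  choose μ hμ hmin using fun i ↦ exists_min_image τ (f i) hτ
  exact ⟨μ, fun i ↦ ⟨hμ i, hmin i⟩⟩

theorem IsWorst.beats_iff (hμ : IsWorst f τ μ) :
    Beats f τ C y ↔ ∀ i ∈ C, f i (μ i) < f i y :=
  ⟨fun h i hi ↦ let ⟨x, hx, hxy⟩ := h i hi; ((hμ i).2 x hx).trans_lt hxy,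
    fun h i hi ↦ ⟨μ i, (hμ i).1, h i hi⟩⟩

theorem IsWorst.image_eq_of_dominant [DecidableEq X] (hμ : IsWorst f τ μ)
    (hf : ∀ i, Function.Injective (f i)) (hτ : Dominant f τ C) : C.image μ = τ := by
  refine Subset.antisymm (image_subset_iff.2 fun i _ ↦ (hμ i).1) fun x hx ↦ ?_
  obtain ⟨i, hi, hxi⟩ := hτ.exists_forall_le x
  exact mem_image.2 ⟨i, hi, hf i (((hμ i).2 x hx).antisymm (hxi _ (hμ i).1))⟩

variable [DecidableEq I]

theorem IsEntering.unique (hf : Function.Injective (f k)) (hy : IsEntering f τ D k y)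
    (hz : IsEntering f τ D k z) : y = z :=
  hf ((hz.2 y hy.1).antisymm (hy.2 z hz.1))

theorem IsEntering.not_dominant_erase (hy : IsEntering f τ D k y) : ¬Dominant f τ (D.erase k) :=
  fun h ↦ h y hy.1

theorem exists_isEntering_of_not_dominant_erase [Finite X] (h : ¬Dominant f τ (D.erase k)) :
    ∃ y, IsEntering f τ D k y := by
  simp only [Dominant, not_forall, not_not] at h
  exact Set.exists_max_image {y | Beats f τ (D.erase k) y} (f k) (Set.toFinite _) h

theorem Dominant.index_eq_of_isEntering (hτ : Dominant f τ D) (hk : IsEntering f τ D k y)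
    (hl : IsEntering f τ D l y) : k = l := by
  obtain ⟨i, hi, hyi⟩ := hτ.exists_forall_le y
  have eq_index {j} (hj : IsEntering f τ D j y) : i = j := by
    by_contra hij
    obtain ⟨x, hx, hxy⟩ := hj.1 i (mem_erase.2 ⟨hij, hi⟩)
    exact (hyi x hx).not_gt hxy
  exact (eq_index hk).symm.trans (eq_index hl)

variable [DecidableEq X]

theorem IsWorst.notMem_of_isEntering (hμ : IsWorst f τ μ) (hk : (D.erase k).image μ = τ)
    (hy : IsEntering f τ D k y) : y ∉ τ := by
  intro hyτ
  obtain ⟨l, hl, rfl⟩ := mem_image.1 (hk.ge hyτ)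
  exact (hμ.beats_iff.1 hy.1 l hl).false

theorem IsEntering.dominant_insert (hy : IsEntering f τ D k y) (hτ : Dominant f τ D) (hkD : k ∈ D) :
    Dominant f (insert y τ) D := by
  intro z hz
  have hzτ : Beats f τ (D.erase k) z := by
    intro l hl
    obtain ⟨x, hx, hxz⟩ := hz l (mem_of_mem_erase hl)
    obtain rfl | hx := mem_insert.1 hx
    · obtain ⟨x', hx', hlt⟩ := hy.1 l hl
      exact ⟨x', hx', hlt.trans hxz⟩
    · exact ⟨x, hx, hxz⟩
  refine hτ z fun l hl ↦ ?_
  obtain rfl | hlk := eq_or_ne l k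
  · obtain ⟨x, hx, hxz⟩ := hz l hkD
    obtain rfl | hx := mem_insert.1 hx
    · exact absurd hxz (hy.2 z hzτ).not_gt
    · exact ⟨x, hx, hxz⟩
  · exact hzτ l (mem_erase.2 ⟨hlk, hl⟩)

theorem IsWorst.exists_isEntering_of_dominant_insert (hμ : IsWorst f τ μ)
    (hf : ∀ i, Function.Injective (f i)) (hcard : #D = #τ + 1) (hy : y ∉ τ)
    (hdom : Dominant f (insert y τ) D) :
    ∃ k ∈ D, (D.erase k).image μ = τ ∧ IsEntering f τ D k y := by
  obtain ⟨k, hk, hyk⟩ := hdom.exists_forall_le y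
  have exists_index {x} (hx : x ∈ τ) : ∃ l ∈ D.erase k, μ l = x ∧ f l x < f l y := by
    obtain ⟨l, hl, hxl⟩ := hdom.exists_forall_le x
    have hxy : f l x < f l y :=
      (hxl y (mem_insert_self y τ)).lt_of_ne fun h ↦ hy (hf l h ▸ hx)
    refine ⟨l, mem_erase.2 ⟨?_, hl⟩, ?_, hxy⟩
    · rintro rfl
      exact (hyk x (mem_insert_of_mem hx)).not_gt hxy
    · exact hf l (((hμ l).2 x hx).antisymm (hxl _ (mem_insert_of_mem (hμ l).1)))
  have himage : (D.erase k).image μ = τ :=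
    Subset.antisymm (image_subset_iff.2 fun i _ ↦ (hμ i).1) fun x hx ↦
      let ⟨l, hl, hlx, _⟩ := exists_index hx
      mem_image.2 ⟨l, hl, hlx⟩
  have hinj : Set.InjOn μ (D.erase k) := by
    rw [← card_image_iff, himage, card_erase_of_mem hk, hcard, Nat.add_sub_cancel]
  have hbeats : Beats f τ (D.erase k) y := hμ.beats_iff.2 fun l hl ↦ by
    obtain ⟨l', hl', hμl, hlt⟩ := exists_index (hμ l).1
    obtain rfl := hinj hl' hl hμl
    exact hlt
  refine ⟨k, hk, himage, hbeats, fun z hz ↦ ?_⟩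
  obtain ⟨l, hl, hzl⟩ := hdom.exists_forall_le z
  obtain rfl | hlk := eq_or_ne l k
  · exact hzl y (mem_insert_self y τ)
  · obtain ⟨x, hx, hxz⟩ := hz l (mem_erase.2 ⟨hlk, hl⟩)
    exact absurd hxz (hzl x (mem_insert_of_mem hx)).not_gt

open Classical in
theorem IsWorst.card_filter_dominant_insert [Fintype X] (hμ : IsWorst f τ μ)
    (hf : ∀ i, Function.Injective (f i)) (hτ : Dominant f τ D) (hcard : #D = #τ + 1)
    (hne : τ.Nonempty) :
    #{y | y ∉ τ ∧ Dominant f (insert y τ) D} =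
      #{k ∈ D | (D.erase k).image μ = τ ∧ ¬Dominant f τ (D.erase k)} := by
  have : Nonempty X := ⟨hne.choose⟩
  choose! entering hentering using
    fun k ↦ exists_isEntering_of_not_dominant_erase (f := f) (τ := τ) (D := D) (k := k)
  symm
  refine card_nbij entering ?_ ?_ ?_
  · intro k hk
    obtain ⟨hkD, himage, hk⟩ := mem_filter.1 hk
    exact mem_filter.2 ⟨mem_univ _, hμ.notMem_of_isEntering himage (hentering k hk),
      (hentering k hk).dominant_insert hτ hkD⟩
  · intro k hk l hl hkl
    have hk := hentering k (mem_filter.1 hk).2.2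
    exact hτ.index_eq_of_isEntering hk (hkl ▸ hentering l (mem_filter.1 hl).2.2)
  · intro y hy
    obtain ⟨hyτ, hdom⟩ := (mem_filter.1 hy).2
    obtain ⟨k, hk, himage, hky⟩ := hμ.exists_isEntering_of_dominant_insert hf hcard hyτ hdom
    exact ⟨k, mem_filter.2 ⟨hk, himage, hky.not_dominant_erase⟩,
      (hentering k hky.not_dominant_erase).unique (hf k) hky⟩

open Classical in
theorem Dominant.card_add_card_eq_two [Fintype X] (hτ : Dominant f τ D)
    (hf : ∀ i, Function.Injective (f i)) (hcard : #D = #τ + 1) (hne : τ.Nonempty) :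
    #{y | y ∉ τ ∧ Dominant f (insert y τ) D} + #{k ∈ D | Dominant f τ (D.erase k)} = 2 := by
  obtain ⟨μ, hμ⟩ := exists_isWorst f hne
  have hD : D.image μ = τ := hμ.image_eq_of_dominant hf hτ
  -- As `μ` maps `D` onto `τ`, exactly two criteria of `D` are redundant for this. Giving up a
  -- redundant criterion either preserves dominance or makes room for a unique entering element.
  have card_redundant : #{k ∈ D | (D.erase k).image μ = τ} = 2 := by
    simpa only [hD] using card_filter_image_erase_eq_image (s := D) (g := μ) (by rw [hD, hcard])
  have hremove : #{k ∈ D | Dominant f τ (D.erase k)} =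
      #{k ∈ D | (D.erase k).image μ = τ ∧ Dominant f τ (D.erase k)} :=
    congrArg card <| filter_congr fun k _ ↦
      (and_iff_right_of_imp (hμ.image_eq_of_dominant hf)).symm
  rw [hμ.card_filter_dominant_insert hf hτ hcard hne, hremove, ← filter_filter, ← filter_filter,
    add_comm, card_filter_add_card_filter_not, card_redundant]

end Dominant

section ScarfComplex

variable {I X L : Type*} [Fintype I] [Fintype X] [DecidableEq I] [DecidableEq X] [LinearOrder L]
  {f : I → X → L} {s : Finset (X ⊕ I)}

open Classical in
/-- The facets of Scarf's complex. A pair of a set `σ` of elements and a set `C` of as many criteria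
is encoded as the disjoint union of `σ` with the complement of `C`; the facets are the pairs with
`σ` dominant for `C`, and the pair of empty sets, which closes the complex up to a
pseudomanifold. -/
noncomputable def scarfFacets (f : I → X → L) : Finset (Finset (X ⊕ I)) :=
  {s | #s = Fintype.card I ∧ (Dominant f s.toLeft s.toRightᶜ ∨ s.toLeft = ∅)}

theorem mem_scarfFacets :
    s ∈ scarfFacets f ↔
      #s = Fintype.card I ∧ (Dominant f s.toLeft s.toRightᶜ ∨ s.toLeft = ∅) := by
  simp [scarfFacets]

open Classical in
theorem card_filter_insert_mem_scarfFacets (hs : #s + 1 = Fintype.card I) :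
    #{v | insert v s ∈ scarfFacets f} =
      #{y | y ∉ s.toLeft ∧ Dominant f (insert y s.toLeft) s.toRightᶜ} +
        #{k ∈ s.toRightᶜ | Dominant f s.toLeft (s.toRightᶜ.erase k) ∨ s.toLeft = ∅} := by
  have card_insert_iff (v : X ⊕ I) : #(insert v s) = Fintype.card I ↔ v ∉ s := by
    rw [← hs]
    by_cases hv : v ∈ s <;> simp [hv]
  rw [← card_toLeft_add_card_toRight]
  congr 2 <;> ext v
  · simp [mem_scarfFacets, card_insert_iff]
  · simp [mem_scarfFacets, card_insert_iff, compl_insert]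

open Classical in
theorem even_card_filter_insert_mem_scarfFacets [Nonempty X] (hf : ∀ i, Function.Injective (f i))
    (hs : #s + 1 = Fintype.card I) :
    Even #{v | insert v s ∈ scarfFacets f} := by
  rw [card_filter_insert_mem_scarfFacets hs]
  have hcard : #s.toRightᶜ = #s.toLeft + 1 := by
    have := card_compl_add_card s.toRight
    have := card_toLeft_add_card_toRight (u := s)
    omega
  generalize s.toLeft = τ, s.toRightᶜ = D at hcard ⊢
  obtain rfl | hne := τ.eq_empty_or_nonempty
  · obtain ⟨k, rfl⟩ := card_eq_one.1 hcard
    obtain ⟨y, hy⟩ := Finite.exists_max (f k)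
    have hmax : ({z | ∀ x, f k x ≤ f k z} : Finset X) = {y} := by
      ext z
      simpa using ⟨fun hz ↦ hf k ((hy z).antisymm (hz y)), fun hz ↦ hz ▸ hy⟩
    simp [dominant_singleton_iff, hmax]
  simp only [hne.ne_empty, or_false]
  by_cases hτ : Dominant f τ D
  · rw [hτ.card_add_card_eq_two hf hcard hne]
    exact even_two
  · have hinsert (y : X) : ¬Dominant f (insert y τ) D :=
      fun h ↦ hτ (h.mono (subset_insert y τ) le_rfl)
    have herase (k : I) : ¬Dominant f τ (D.erase k) :=
      fun h ↦ hτ (h.mono le_rfl (erase_subset k D))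
    simp [hinsert, herase]

end ScarfComplex

section ScarfLemma

variable {I X L : Type*} [Finite I] [Finite X] [Nonempty X] [DecidableEq I] [LinearOrder L]

theorem exists_dominant_image_of_injective {f : I → X → L}
    (hf : ∀ i, Function.Injective (f i)) (c : X → I) : ∃ σ, Dominant f σ (σ.image c) := by
  classical
  cases nonempty_fintype I
  cases nonempty_fintype X
  have : Nonempty I := ‹Nonempty X›.map c
  let color : X ⊕ I → I := Sum.elim c id
  let outer : Finset (X ⊕ I) := univ.map .inr
  let colorful := {s ∈ scarfFacets f | s.image color = univ}
  have heven : Even #colorful :=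
    even_card_filter_image_eq_univ (fun s hs ↦ (mem_scarfFacets.1 hs).1)
      (fun τ hτ ↦ even_card_filter_insert_mem_scarfFacets hf hτ) color
  have outer_mem : outer ∈ colorful := by
    refine mem_filter.2 ⟨mem_scarfFacets.2 ⟨by simp [outer], .inr ?_⟩, ?_⟩
    · ext x
      simp [outer]
    · ext i
      simp [outer, color]
  obtain ⟨s, hs, hne⟩ : ∃ s ∈ colorful, s ≠ outer := by
    by_contra! h
    simp [eq_singleton_iff_unique_mem.2 ⟨outer_mem, h⟩] at heven
  obtain ⟨hs, himage⟩ := mem_filter.1 hs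
  obtain ⟨hcard, hdom | hempty⟩ := mem_scarfFacets.1 hs
  · refine ⟨s.toLeft, hdom.mono le_rfl fun i hi ↦ ?_⟩
    obtain ⟨x | j, hv, rfl⟩ := mem_image.1 (himage.ge (mem_univ i))
    · exact mem_image_of_mem c (mem_toLeft.2 hv)
    · exact absurd (mem_toRight.2 hv) (mem_compl.1 hi)
  · have hfull : s.toRight = univ := by
      rw [← card_eq_iff_eq_univ, ← hcard, ← card_toLeft_add_card_toRight, hempty]
      simp
    refine absurd ?_ hne
    ext (x | k)
    · simp [outer, ← mem_toLeft, hempty]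
    · simp [outer, ← mem_toRight, hfull]

theorem exists_dominant_image (f : I → X → L) (c : X → I) :
    ∃ σ, Dominant f σ (σ.image c) := by
  cases nonempty_fintype X
  -- Ties are broken lexicographically by an enumeration of `X`.
  let e := Fintype.equivFin X
  let g : I → X → L ×ₗ Fin (Fintype.card X) := fun i x ↦ toLex (f i x, e x)
  have hg (i : I) : Function.Injective (g i) := fun x y hxy ↦
    e.injective (congrArg (fun p ↦ (ofLex p).2) hxy)
  obtain ⟨σ, hσ⟩ := exists_dominant_image_of_injective hg c
  refine ⟨σ, fun y hy ↦ hσ y fun i hi ↦ ?_⟩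
  obtain ⟨x, hx, hxy⟩ := hy i hi
  exact ⟨x, hx, Prod.Lex.toLex_lt_toLex.2 (.inl hxy)⟩

end ScarfLemma

section Grid

variable {I : Type*} [Fintype I] {N : ℕ}

theorem lt_sum_of_dominant_coordinates [DecidableEq I] [Nonempty I]
    {σ : Finset (piAntidiag (univ : Finset I) N)} {C : Finset I} {m : I → ℕ}
    (hσ : Dominant (fun i x ↦ x.1 i) σ C) (hm : ∀ i ∈ C, ∃ x ∈ σ, x.1 i = m i) :
    N < ∑ i, (m i + 1) := by
  by_contra! hle
  obtain ⟨i₀⟩ := ‹Nonempty I›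
  let y : I → ℕ := fun i ↦ m i + 1 + (Pi.single i₀ (N - ∑ j, (m j + 1)) : I → ℕ) i
  have hy : ∑ i, y i = N := by
    rw [sum_add_distrib, sum_pi_single', if_pos (mem_univ i₀), Nat.add_sub_cancel' hle]
  refine hσ ⟨y, mem_piAntidiag.2 ⟨hy, by simp⟩⟩ fun i hi ↦ ?_
  obtain ⟨x, hx, hxm⟩ := hm i hi
  exact ⟨x, hx, by simp only [hxm, y]; omega⟩

theorem exists_le_lt_add_card_of_dominant_coordinates [DecidableEq I] [Nonempty I]
    {σ : Finset (piAntidiag (univ : Finset I) N)} {C : Finset I}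
    (hσ : Dominant (fun i x ↦ x.1 i) σ C) (hne : σ.Nonempty) :
    ∃ m : I → ℕ, (∀ i ∉ C, m i = 0) ∧
      ∀ x ∈ σ, ∀ i, m i ≤ x.1 i ∧ x.1 i < m i + Fintype.card I := by
  let m : I → ℕ := fun i ↦ if i ∈ C then σ.inf' hne (fun x ↦ x.1 i) else 0
  have m_le {x} (hx : x ∈ σ) (i : I) : m i ≤ x.1 i := by
    simp only [m]
    split_ifs
    · exact inf'_le _ hx
    · exact Nat.zero_le _
  have hlt : N < ∑ i, (m i + 1) := lt_sum_of_dominant_coordinates hσ fun i hi ↦ by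
    obtain ⟨x, hx, hmx⟩ := exists_mem_eq_inf' hne fun x ↦ x.1 i
    exact ⟨x, hx, by simp [m, hi, hmx]⟩
  refine ⟨m, fun i hi ↦ if_neg hi, fun x hx i ↦ ⟨m_le hx i, ?_⟩⟩
  have hsum : ∑ j, x.1 j = N := (mem_piAntidiag.1 x.2).1
  have hexcess : x.1 i - m i ≤ N - ∑ j, m j := calc
    x.1 i - m i ≤ ∑ j, (x.1 j - m j) :=
      single_le_sum (f := fun j ↦ x.1 j - m j) (fun _ _ ↦ Nat.zero_le _) (mem_univ i)
    _ = N - ∑ j, m j := by rw [sum_tsub_distrib _ fun j _ ↦ m_le hx j, hsum]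
  have hsum_le : ∑ j, m j ≤ N := hsum ▸ sum_le_sum fun j _ ↦ m_le hx j
  simp only [sum_add_distrib, sum_const, card_univ, smul_eq_mul, mul_one] at hlt
  have := m_le hx i
  omega

theorem exists_sum_eq_forall_lt_card_or_exists_near (N : ℕ) (c : (I → ℕ) → I) :
    ∃ x : I → ℕ, ∑ i, x i = N ∧ ∀ i, x i < Fintype.card I ∨
      ∃ y : I → ℕ, ∑ j, y j = N ∧ c y = i ∧
        ∀ j, x j < y j + Fintype.card I ∧ y j < x j + Fintype.card I := by
  classical
  have : Nonempty I := ⟨c 0⟩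
  have : Nonempty (piAntidiag (univ : Finset I) N) :=
    ⟨⟨Pi.single (c 0) N, by simp [mem_piAntidiag]⟩⟩
  obtain ⟨σ, hσ⟩ :=
    exists_dominant_image (fun i (x : piAntidiag (univ : Finset I) N) ↦ x.1 i) (fun x ↦ c x.1)
  have hne : σ.Nonempty := by
    rw [nonempty_iff_ne_empty]
    rintro rfl
    exact hσ (Classical.arbitrary _) (by simp [Beats])
  obtain ⟨m, hm, hbox⟩ := exists_le_lt_add_card_of_dominant_coordinates hσ hne
  obtain ⟨x, hx⟩ := hne
  refine ⟨x.1, (mem_piAntidiag.1 x.2).1, fun i ↦ ?_⟩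
  by_cases hi : i ∈ σ.image fun x ↦ c x.1
  · obtain ⟨y, hy, hcy⟩ := mem_image.1 hi
    refine .inr ⟨y.1, (mem_piAntidiag.1 y.2).1, hcy, fun j ↦ ?_⟩
    have := hbox x hx j
    have := hbox y hy j
    omega
  · refine .inl ?_
    simpa [hm i hi] using (hbox x hx i).2

end Grid

section Covering

open Filter Topology

variable {I : Type*} [Fintype I] {F : I → Set (I → ℝ)}

theorem div_mem_stdSimplex {N : ℕ} (hN : N ≠ 0) {x : I → ℕ} (hx : ∑ i, x i = N) :
    (fun i ↦ (x i / N : ℝ)) ∈ stdSimplex ℝ I := by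
  refine ⟨fun i ↦ by positivity, ?_⟩
  rw [← sum_div, ← Nat.cast_sum, hx, div_self (Nat.cast_ne_zero.2 hN)]

theorem exists_mem_stdSimplex_forall_le_or_exists_dist_le [Nonempty I]
    (hcover : stdSimplex ℝ I ⊆ ⋃ i, F i) {N : ℕ} (hN : N ≠ 0) :
    ∃ z ∈ stdSimplex ℝ I, ∀ i, z i ≤ Fintype.card I / N ∨
      ∃ w ∈ F i, dist z w ≤ Fintype.card I / N := by
  classical
  let scale (x : I → ℕ) : I → ℝ := fun i ↦ x i / N
  have exists_color (x : I → ℕ) : ∃ i, ∑ j, x j = N → scale x ∈ F i := by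
    by_cases hx : ∑ j, x j = N
    · obtain ⟨i, hi⟩ := Set.mem_iUnion.1 (hcover (div_mem_stdSimplex hN hx))
      exact ⟨i, fun _ ↦ hi⟩
    · exact ⟨Classical.arbitrary I, fun h ↦ absurd h hx⟩
  choose c hc using exists_color
  obtain ⟨x, hx, hnear⟩ := exists_sum_eq_forall_lt_card_or_exists_near N c
  refine ⟨scale x, div_mem_stdSimplex hN hx, fun i ↦ (hnear i).imp (fun hxi ↦ ?_) ?_⟩
  · simp only [scale]
    gcongr
  · rintro ⟨y, hy, rfl, hxy⟩
    refine ⟨scale y, hc y hy, (dist_pi_le_iff (by positivity)).2 fun j ↦ ?_⟩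
    rw [Real.dist_eq, ← sub_div, abs_div, Nat.abs_cast]
    gcongr
    have := hxy j
    rw [abs_sub_le_iff, sub_le_iff_le_add', sub_le_iff_le_add']
    exact ⟨mod_cast this.1.le, mod_cast this.2.le⟩

theorem exists_mem_stdSimplex_forall_eq_zero_or_mem [Nonempty I] (hF : ∀ i, IsClosed (F i))
    (hcover : stdSimplex ℝ I ⊆ ⋃ i, F i) :
    ∃ z ∈ stdSimplex ℝ I, ∀ i, z i = 0 ∨ z ∈ F i := by
  choose z hz hnear using fun n : ℕ ↦
    exists_mem_stdSimplex_forall_le_or_exists_dist_le hcover n.succ_ne_zero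
  obtain ⟨z₀, hz₀, φ, hφ, hlim⟩ := (isCompact_stdSimplex ℝ I).tendsto_subseq hz
  refine ⟨z₀, hz₀, fun i ↦ or_iff_not_imp_left.2 fun hi ↦ ?_⟩
  let error (n : ℕ) : ℝ := Fintype.card I / (φ n).succ
  have herror : Tendsto error atTop (𝓝 0) :=
    tendsto_const_div_atTop_nhds_zero_nat _ |>.comp
      ((tendsto_add_atTop_nat 1).comp hφ.tendsto_atTop)
  have hcoord : Tendsto (fun n ↦ z (φ n) i) atTop (𝓝 (z₀ i)) := tendsto_pi_nhds.1 hlim i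
  have hdist : Tendsto (fun n ↦ dist (z (φ n)) z₀ + error n) atTop (𝓝 0) := by
    simpa only [Function.comp_apply, add_zero] using
      (tendsto_iff_dist_tendsto_zero.1 hlim).add herror
  have hpos : 0 < z₀ i := (hz₀.1 i).lt_of_ne' hi
  rw [← (hF i).closure_eq, Metric.mem_closure_iff]
  intro ε hε
  obtain ⟨n, hlt, hdist⟩ :=
    ((herror.eventually_lt hcoord hpos).and (hdist.eventually_lt_const hε)).exists
  obtain ⟨w, hw, hzw⟩ := (hnear (φ n) i).resolve_left hlt.not_ge
  refine ⟨w, hw, (dist_triangle_left z₀ w (z (φ n))).trans_lt (lt_of_le_of_lt ?_ hdist)⟩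
  gcongr

end Covering

section VariationalInequality

variable {I : Type*} [Fintype I]

theorem dotProduct_le_dotProduct_of_forall_eq_zero_or_le {z w v : I → ℝ} (hz : z ∈ stdSimplex ℝ I)
    (hw : w ∈ stdSimplex ℝ I) (hv : ∀ i, z i = 0 ∨ ∀ j, v j ≤ v i) : w ⬝ᵥ v ≤ z ⬝ᵥ v := by
  have average_le {m : ℝ} (hm : ∀ j, v j ≤ m) : w ⬝ᵥ v ≤ m := calc
    w ⬝ᵥ v ≤ ∑ j, w j * m := sum_le_sum fun j _ ↦ mul_le_mul_of_nonneg_left (hm j) (hw.1 j)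
    _ = m := by rw [← sum_mul, hw.2, one_mul]
  calc
    w ⬝ᵥ v = ∑ i, z i * (w ⬝ᵥ v) := by rw [← sum_mul, hz.2, one_mul]
    _ ≤ z ⬝ᵥ v := sum_le_sum fun i _ ↦ by
      obtain hi | hi := hv i
      · simp [hi]
      · exact mul_le_mul_of_nonneg_left (average_le hi) (hz.1 i)

theorem exists_forall_dotProduct_le_of_continuousOn [Nonempty I] {f : (I → ℝ) → I → ℝ}
    (hf : ContinuousOn f (stdSimplex ℝ I)) :
    ∃ z ∈ stdSimplex ℝ I, ∀ w ∈ stdSimplex ℝ I, w ⬝ᵥ f z ≤ z ⬝ᵥ f z := by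
  let F (i : I) : Set (I → ℝ) := {z ∈ stdSimplex ℝ I | f z ≤ fun _ ↦ f z i}
  have hF (i : I) : IsClosed (F i) :=
    (isClosed_stdSimplex ℝ I).isClosed_le hf
      (continuousOn_pi.2 fun _ ↦ (continuousOn_pi.1 hf) i)
  have hcover : stdSimplex ℝ I ⊆ ⋃ i, F i := fun z hz ↦ by
    obtain ⟨i, hi⟩ := Finite.exists_max (f z)
    exact Set.mem_iUnion.2 ⟨i, hz, hi⟩
  obtain ⟨z, hz, hzF⟩ := exists_mem_stdSimplex_forall_eq_zero_or_mem hF hcover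
  exact ⟨z, hz, fun w hw ↦ dotProduct_le_dotProduct_of_forall_eq_zero_or_le hz hw
    fun i ↦ (hzF i).imp_right fun hi ↦ hi.2⟩

end VariationalInequality

section Product

variable {A B : Type*}

/-- The marginal on the first factor of a distribution on a product. -/
def fstMarginal [Fintype B] (z : A × B → ℝ) (a : A) : ℝ :=
  ∑ b, z (a, b)

/-- The marginal on the second factor of a distribution on a product. -/
def sndMarginal [Fintype A] (z : A × B → ℝ) (b : B) : ℝ :=
  ∑ a, z (a, b)

/-- The joint distribution of two independent variables with distributions `p` and `q`. -/
def productDistribution (p : A → ℝ) (q : B → ℝ) (x : A × B) : ℝ :=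
  p x.1 * q x.2

variable {p : A → ℝ} {q : B → ℝ} {z : A × B → ℝ}

theorem fstMarginal_productDistribution [Fintype B] (p : A → ℝ) (hq : q ∈ stdSimplex ℝ B) :
    fstMarginal (productDistribution p q) = p := by
  ext a
  simp only [fstMarginal, productDistribution, ← mul_sum, hq.2, mul_one]

theorem sndMarginal_productDistribution [Fintype A] (hp : p ∈ stdSimplex ℝ A) (q : B → ℝ) :
    sndMarginal (productDistribution p q) = q := by
  ext b
  simp only [sndMarginal, productDistribution, ← sum_mul, hp.2, one_mul]

variable [Fintype A] [Fintype B]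

theorem fstMarginal_mem_stdSimplex (hz : z ∈ stdSimplex ℝ (A × B)) :
    fstMarginal z ∈ stdSimplex ℝ A :=
  ⟨fun _ ↦ sum_nonneg fun _ _ ↦ hz.1 _, by
    simp only [fstMarginal, ← Fintype.sum_prod_type', Prod.mk.eta, hz.2]⟩

theorem sndMarginal_mem_stdSimplex (hz : z ∈ stdSimplex ℝ (A × B)) :
    sndMarginal z ∈ stdSimplex ℝ B :=
  ⟨fun _ ↦ sum_nonneg fun _ _ ↦ hz.1 _, by
    simp only [sndMarginal, ← Fintype.sum_prod_type_right', Prod.mk.eta, hz.2]⟩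

theorem productDistribution_mem_stdSimplex (hp : p ∈ stdSimplex ℝ A) (hq : q ∈ stdSimplex ℝ B) :
    productDistribution p q ∈ stdSimplex ℝ (A × B) :=
  ⟨fun x ↦ mul_nonneg (hp.1 x.1) (hq.1 x.2), by
    simp only [productDistribution, Fintype.sum_prod_type, ← mul_sum, hq.2, mul_one, hp.2]⟩

theorem dotProduct_fst_add_snd (z : A × B → ℝ) (v : A → ℝ) (w : B → ℝ) :
    (z ⬝ᵥ fun x ↦ v x.1 + w x.2) = fstMarginal z ⬝ᵥ v + sndMarginal z ⬝ᵥ w := by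
  simp only [dotProduct, fstMarginal, sndMarginal, mul_add, sum_add_distrib, sum_mul]
  rw [Fintype.sum_prod_type, Fintype.sum_prod_type_right]

theorem exists_forall_dotProduct_le_and_forall_dotProduct_le [Nonempty A] [Nonempty B]
    {g : (A → ℝ) × (B → ℝ) → A → ℝ} {h : (A → ℝ) × (B → ℝ) → B → ℝ}
    (hg : ContinuousOn g (stdSimplex ℝ A ×ˢ stdSimplex ℝ B))
    (hh : ContinuousOn h (stdSimplex ℝ A ×ˢ stdSimplex ℝ B)) :
    ∃ p ∈ stdSimplex ℝ A, ∃ q ∈ stdSimplex ℝ B,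
      (∀ p' ∈ stdSimplex ℝ A, p' ⬝ᵥ g (p, q) ≤ p ⬝ᵥ g (p, q)) ∧
      (∀ q' ∈ stdSimplex ℝ B, q' ⬝ᵥ h (p, q) ≤ q ⬝ᵥ h (p, q)) := by
  let marginals (z : A × B → ℝ) : (A → ℝ) × (B → ℝ) := (fstMarginal z, sndMarginal z)
  have hmarginals : Continuous marginals := by
    unfold marginals fstMarginal sndMarginal
    fun_prop
  have hmaps : Set.MapsTo marginals (stdSimplex ℝ (A × B)) (stdSimplex ℝ A ×ˢ stdSimplex ℝ B) :=
    fun z hz ↦ ⟨fstMarginal_mem_stdSimplex hz, sndMarginal_mem_stdSimplex hz⟩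
  have hg' := hg.comp hmarginals.continuousOn hmaps
  have hh' := hh.comp hmarginals.continuousOn hmaps
  obtain ⟨z, hz, hmax⟩ := exists_forall_dotProduct_le_of_continuousOn
    (f := fun z x ↦ g (marginals z) x.1 + h (marginals z) x.2)
    (continuousOn_pi.2 fun x ↦ (continuousOn_pi.1 hg' x.1).add (continuousOn_pi.1 hh' x.2))
  have hp := fstMarginal_mem_stdSimplex hz
  have hq := sndMarginal_mem_stdSimplex hz
  refine ⟨fstMarginal z, hp, sndMarginal z, hq, fun p' hp' ↦ ?_, fun q' hq' ↦ ?_⟩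
  · have := hmax _ (productDistribution_mem_stdSimplex hp' hq)
    rw [dotProduct_fst_add_snd, dotProduct_fst_add_snd, fstMarginal_productDistribution _ hq,
      sndMarginal_productDistribution hp'] at this
    exact le_of_add_le_add_right this
  · have := hmax _ (productDistribution_mem_stdSimplex hp hq')
    rw [dotProduct_fst_add_snd, dotProduct_fst_add_snd, fstMarginal_productDistribution _ hq',
      sndMarginal_productDistribution hp] at this
    exact le_of_add_le_add_left this

theorem sum_sum_mul_mul_eq_dotProduct_mulVec (p : A → ℝ) (q : B → ℝ) (u : A → B → ℝ) :
    ∑ a, ∑ b, p a * q b * u a b = p ⬝ᵥ (Matrix.of u).mulVec q := by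
  simp only [dotProduct, Matrix.mulVec, Matrix.of_apply, mul_sum]
  exact sum_congr rfl fun a _ ↦ sum_congr rfl fun b _ ↦ by ring

end Product

end NashExistence

open Matrix NashExistence

/-- Proposition 2, Nash's existence theorem: every two-player game with
finite nonempty action sets and real-valued utilities has at least one mixed-strategy
Nash equilibrium. -/
theorem stmt_2 {A1 A2 : Type*} [Fintype A1] [Fintype A2] [Nonempty A1] [Nonempty A2]
    (u1 u2 : A1 → A2 → ℝ) :
    ∃ p ∈ stdSimplex ℝ A1, ∃ q ∈ stdSimplex ℝ A2,
      (∀ p' ∈ stdSimplex ℝ A1,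
        ∑ a : A1, ∑ b : A2, p' a * q b * u1 a b ≤ ∑ a : A1, ∑ b : A2, p a * q b * u1 a b) ∧
      (∀ q' ∈ stdSimplex ℝ A2,
        ∑ a : A1, ∑ b : A2, p a * q' b * u2 a b ≤ ∑ a : A1, ∑ b : A2, p a * q b * u2 a b) := by
  have hu1 : Continuous fun s : (A1 → ℝ) × (A2 → ℝ) ↦ of u1 *ᵥ s.2 := by fun_prop
  have hu2 : Continuous fun s : (A1 → ℝ) × (A2 → ℝ) ↦ s.1 ᵥ* of u2 := by fun_prop
  obtain ⟨p, hp, q, hq, hbest1, hbest2⟩ :=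
    exists_forall_dotProduct_le_and_forall_dotProduct_le hu1.continuousOn hu2.continuousOn
  refine ⟨p, hp, q, hq, fun p' hp' ↦ ?_, fun q' hq' ↦ ?_⟩
  · simpa only [sum_sum_mul_mul_eq_dotProduct_mulVec] using hbest1 p' hp'
  · simpa only [sum_sum_mul_mul_eq_dotProduct_mulVec, dotProduct_mulVec, dotProduct_comm (p ᵥ* _)]
      using hbest2 q' hq'
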